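/- arXiv:1412.3959 — 2 statements merged into one kernel-verified Lean document; each statement's English description precedes it below -/
import Mathlib

section
/- Let N ≥ 1, let R > 400 be an integer, U^N = {x ∈ ℤ^d : |x| < NR}, and let f : U^N → (0,∞) be such that π = f² is a probability measure on U^N satisfying: (a) π(x) ≥ c₀·π(y) whenever x, y ∈ U^N with |x| ≤ |y|; and (b) c₁·N^{−d−4} ≤ π(x) ≤ c₂·N^{−d} for all x ∈ U^N. Then there exists a constant c > 0, depending only on d, R, c₀, c₁, c₂, such that the Poincaré inequality Var_π(g) ≤ c·N²·Ē(g,g) holds for every g : U^N → ℝ, where Ē(g,g) = ½ Σ_{x,y∈U^N,|x−y|=1} (f(x)f(y)/(2d))(g(x)−g(y))². Equivalently, the spectral gap λ̄ of −L̃ (the second smallest eigenvalue of minus the generator (L̃g)(x) = (1/(2d)) Σ_{y∈U^N,|y−x|=1} (f(y)/f(x))(g(y)−g(x)), which is self-adjoint in ℓ²(π)) satisfies λ̄ ≥ c^{−1}·N^{−2}. -/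
/-!
The Poincaré inequality is proved by canonical paths from an arbitrary `x ∈ U` to the points `b` of a
small central box `B = [-m, m]^d`, with `m = N / K` and `K` a large constant.

The path from `x` to `b` replaces the coordinates of `x` by those of `b` one at a time, starting with a
coordinate `j` for which `|x j|` is maximal. If `x j ^ 2 ≥ d m ^ 2`, the loss of `x j` pays for everything
that the coordinates of `b` add, so the path never leaves the ball of radius `|x|`, and by almost radial
monotonicity every vertex `v` on it has `π v ≥ c₀ π x`. Otherwise the whole path lies in the ball of radius
`2 d m`; there `π` is of order `N ^ (-d)`, because the upper bound on `π` allows this ball at most half of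
the total mass, and monotonicity compares `π v` with the average outside (`center_lower`).
In both cases `π v ≥ κ π x` (`path_bound`).

After Cauchy-Schwarz along the path, edges are counted as follows. For a fixed set `S` of replaced
coordinates, `(x, b) ↦ (S.piecewise b x, S.piecewise x b)` is a bijection of `Q × Q`, where
`Q = [-NR, NR]^d`, and `(w, u) ↦ (update w i u, w i)` is a bijection of `Q × [-NR, NR]`; so every
edge is charged at most `|Q| (2NR + 1)` times (`sum_piecewise_le`, `sum_update`). As `|Q| / |B|` is bounded
independently of `N`, the resulting constant is of order `N ^ 2`.
-/


open scoped BigOperators Classical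
open Metric Set

noncomputable section

def toR (d : ℕ) (x : Fin d → ℤ) : EuclideanSpace ℝ (Fin d) :=
  (WithLp.equiv 2 (Fin d → ℝ)).symm (fun i => (x i : ℝ))

def latAdj (d : ℕ) (x y : Fin d → ℤ) : Prop := ‖toR d x - toR d y‖ = 1

def wRad (d : ℕ) (a R : ℝ) (z : EuclideanSpace ℝ (Fin d)) : ℝ :=
  if ‖z‖ ≤ a then 1
  else if ‖z‖ ≤ R then (‖z‖ ^ ((2:ℝ) - d) - R ^ ((2:ℝ) - d)) / (a ^ ((2:ℝ) - d) - R ^ ((2:ℝ) - d))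
  else 0

def lap (d : ℕ) (h : EuclideanSpace ℝ (Fin d) → ℝ) (z : EuclideanSpace ℝ (Fin d)) : ℝ :=
  ∑ i : Fin d, fderiv ℝ (fun y => fderiv ℝ h y (EuclideanSpace.single i (1:ℝ))) z
    (EuclideanSpace.single i (1:ℝ))

def hNf (d N : ℕ) (h : EuclideanSpace ℝ (Fin d) → ℝ) (x : Fin d → ℤ) : ℝ :=
  h ((N:ℝ)⁻¹ • toR d x)

def hNsq (d N : ℕ) (h : EuclideanSpace ℝ (Fin d) → ℝ) : ℝ :=
  ∑' x : Fin d → ℤ, (hNf d N h x)^2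

def fConf (d N : ℕ) (h : EuclideanSpace ℝ (Fin d) → ℝ) (x : Fin d → ℤ) : ℝ :=
  hNf d N h x / Real.sqrt (hNsq d N h)

def piConf (d N : ℕ) (h : EuclideanSpace ℝ (Fin d) → ℝ) (x : Fin d → ℤ) : ℝ :=
  (fConf d N h x)^2

def UNf (d N R : ℕ) : Finset (Fin d → ℤ) :=
  (Finset.Icc (fun _ => -((N*R : ℕ) : ℤ)) (fun _ => ((N*R : ℕ) : ℤ))).filter
    (fun x => ‖toR d x‖ < (N:ℝ) * R)

def genOp (d : ℕ) (U : Finset (Fin d → ℤ)) (f g : (Fin d → ℤ) → ℝ) (x : Fin d → ℤ) : ℝ :=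
  (1/(2*(d:ℝ))) * ∑ y ∈ U.filter (fun y => latAdj d y x), (f y / f x) * (g y - g x)

def dirForm (d : ℕ) (U : Finset (Fin d → ℤ)) (f g : (Fin d → ℤ) → ℝ) : ℝ :=
  (1/2) * ∑ x ∈ U, ∑ y ∈ U.filter (fun y => latAdj d x y),
    (f x * f y / (2*(d:ℝ))) * (g x - g y)^2

def boxF (d : ℕ) (x₀ : Fin d → ℤ) (r : ℕ) : Finset (Fin d → ℤ) :=
  Finset.Icc (fun i => x₀ i - (r:ℤ)) (fun i => x₀ i + (r:ℤ))

def Abx (d : ℕ) (x₀ : Fin d → ℤ) (N : ℕ) (r : ℝ) : Finset (Fin d → ℤ) :=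
  boxF d x₀ ⌊(N:ℝ) ^ r⌋₊

def A6b (d : ℕ) (x₀ : Fin d → ℤ) (N : ℕ) (δ : ℝ) : Finset (Fin d → ℤ) :=
  boxF d x₀ ⌊δ * N / 100⌋₊

def KNl (d N : ℕ) (S : Set (EuclideanSpace ℝ (Fin d))) : Set (Fin d → ℤ) :=
  {x | ∃ y ∈ S, ∀ i, |(x i : ℝ) - N * y i| ≤ 1}

def GammaN (d N : ℕ) (δ : ℝ) (K : Set (EuclideanSpace ℝ (Fin d))) : Set (Fin d → ℤ) :=
  {x | x ∉ KNl d N (cthickening (δ/2) K) ∧ ∃ y ∈ KNl d N (cthickening (δ/2) K), latAdj d x y}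

def capZ (d : ℕ) (A : Finset (Fin d → ℤ)) : ℝ :=
  sInf { E : ℝ | ∃ φ : (Fin d → ℤ) → ℝ, (Function.support φ).Finite ∧
    (∀ x ∈ A, 1 ≤ φ x) ∧
    E = (1/2) * ∑' p : (Fin d → ℤ) × (Fin d → ℤ),
      (if latAdj d p.1 p.2 then (1/(2*(d:ℝ))) * (φ p.2 - φ p.1)^2 else 0) }

def genEntry (d : ℕ) (U : Finset (Fin d → ℤ)) (f : (Fin d → ℤ) → ℝ) (x y : Fin d → ℤ) : ℝ :=
  (if latAdj d y x then (1/(2*(d:ℝ))) * (f y / f x) else 0)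
  - (if x = y then (1/(2*(d:ℝ))) * ∑ z ∈ U.filter (fun z => latAdj d z x), f z / f x else 0)

def killedMat (d : ℕ) (U D : Finset (Fin d → ℤ)) (f : (Fin d → ℤ) → ℝ) :
    Matrix {x // x ∈ D} {x // x ∈ D} ℝ :=
  fun x y => genEntry d U f x.1 y.1

def genD (d : ℕ) (U D : Finset (Fin d → ℤ)) (f g : (Fin d → ℤ) → ℝ) (x : Fin d → ℤ) : ℝ :=
  (1/(2*(d:ℝ))) * ((∑ y ∈ D.filter (fun y => latAdj d y x), (f y / f x) * g y)
    - (∑ z ∈ U.filter (fun z => latAdj d z x), (f z / f x)) * g x)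

def nbrs (d : ℕ) (w : Fin d → ℤ) : Finset (Fin d → ℤ) :=
  (Finset.Icc (fun i => w i - 1) (fun i => w i + 1)).filter (fun z => latAdj d z w)

def outBd (d : ℕ) (A : Finset (Fin d → ℤ)) : Finset (Fin d → ℤ) :=
  (A.biUnion (nbrs d)).filter (fun z => z ∉ A)

def discLap (d : ℕ) (g : (Fin d → ℤ) → ℝ) (x : Fin d → ℤ) : ℝ :=
  (1/(2*(d:ℝ))) * ∑ i : Fin d,
    ((g (x + Pi.single i 1) - g x) + (g (x - Pi.single i 1) - g x))

def discEnergy (d : ℕ) (φ : (Fin d → ℤ) → ℝ) : ℝ :=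
  (1/2) * ∑' p : (Fin d → ℤ) × (Fin d → ℤ),
    (if latAdj d p.1 p.2 then (1/(2*(d:ℝ))) * (φ p.2 - φ p.1)^2 else 0)

def dirEnergy (d : ℕ) (u : EuclideanSpace ℝ (Fin d) → ℝ) : ℝ :=
  (1/2) * ∫ z, ‖gradient u z‖^2

def relCap (d : ℕ) (R : ℝ) (A : Set (EuclideanSpace ℝ (Fin d))) : ℝ :=
  sInf { E : ℝ | ∃ u : EuclideanSpace ℝ (Fin d) → ℝ,
    (∃ C : NNReal, LipschitzWith C u) ∧ HasCompactSupport u ∧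
    tsupport u ⊆ ball (0 : EuclideanSpace ℝ (Fin d)) R ∧
    (∀ z ∈ A, 1 ≤ u z) ∧ E = dirEnergy d u }


/-! ### Squared norms as integers -/

/-- The squared Euclidean norm of a lattice point, as an integer. -/
def nsq {d : ℕ} (x : Fin d → ℤ) : ℤ := ∑ i, x i ^ 2

lemma norm_toR_sq {d : ℕ} (x : Fin d → ℤ) : ‖toR d x‖ ^ 2 = ((nsq x : ℤ) : ℝ) := by
  rw [EuclideanSpace.norm_sq_eq]
  simp [toR, nsq]

lemma norm_toR_le {d : ℕ} {x y : Fin d → ℤ} (h : nsq x ≤ nsq y) : ‖toR d x‖ ≤ ‖toR d y‖ := by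
  apply le_of_sq_le_sq _ (norm_nonneg _)
  rw [norm_toR_sq, norm_toR_sq]
  exact_mod_cast h

lemma coord_sq_le_nsq {d : ℕ} (x : Fin d → ℤ) (i : Fin d) : x i ^ 2 ≤ nsq x :=
  Finset.single_le_sum (f := fun i => x i ^ 2) (fun i _ => sq_nonneg (x i)) (Finset.mem_univ i)

lemma mem_UNf {d N R : ℕ} {x : Fin d → ℤ} :
    x ∈ UNf d N R ↔ nsq x < ((N * R : ℕ) : ℤ) ^ 2 := by
  have key : ‖toR d x‖ < (N : ℝ) * R ↔ nsq x < ((N * R : ℕ) : ℤ) ^ 2 := by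
    rw [← abs_of_nonneg (norm_nonneg (toR d x)),
      ← abs_of_nonneg (show (0 : ℝ) ≤ (N : ℝ) * R by positivity), ← sq_lt_sq, norm_toR_sq]
    push_cast
    exact_mod_cast Iff.rfl
  unfold UNf
  rw [Finset.mem_filter, key, Finset.mem_Icc]
  refine ⟨fun h => h.2, fun h => ⟨⟨fun i => ?_, fun i => ?_⟩, h⟩⟩
  · have h1 := (coord_sq_le_nsq x i).trans h.le
    exact (abs_le_of_sq_le_sq' h1 (by positivity)).1
  · have h1 := (coord_sq_le_nsq x i).trans h.le
    exact (abs_le_of_sq_le_sq' h1 (by positivity)).2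

lemma latAdj_single {d : ℕ} (w : Fin d → ℤ) (i : Fin d) : latAdj d w (w + Pi.single i 1) := by
  unfold latAdj
  have h : toR d w - toR d (w + Pi.single i 1) = - EuclideanSpace.single i (1 : ℝ) := by
    ext l
    by_cases hl : l = i
    · subst hl; simp [toR]
    · simp [toR, hl]
  rw [h, norm_neg]
  simp

/-! ### Boxes and edge counting -/

/-- The box `[-M, M]^d`. -/
def cube (d M : ℕ) : Finset (Fin d → ℤ) := Finset.Icc (fun _ => -(M : ℤ)) (fun _ => (M : ℤ))

lemma mem_cube {d M : ℕ} {x : Fin d → ℤ} :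
    x ∈ cube d M ↔ ∀ i, -(M : ℤ) ≤ x i ∧ x i ≤ M := by
  unfold cube
  rw [Finset.mem_Icc]
  exact ⟨fun h i => ⟨h.1 i, h.2 i⟩, fun h => ⟨fun i => (h i).1, fun i => (h i).2⟩⟩

lemma card_cube (d M : ℕ) : (cube d M).card = (2 * M + 1) ^ d := by
  unfold cube
  rw [Pi.card_Icc]
  simp only [Int.card_Icc, Finset.prod_const, Finset.card_univ, Fintype.card_fin]
  congr 1
  omega

lemma UNf_subset_cube (d N R : ℕ) : UNf d N R ⊆ cube d (N * R) := Finset.filter_subset _ _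

lemma sum_piecewise_eq {d M : ℕ} (S : Finset (Fin d)) (F : (Fin d → ℤ) → ℝ) :
    ∑ x ∈ cube d M, ∑ b ∈ cube d M, F (S.piecewise b x)
      = ((cube d M).card : ℝ) * ∑ w ∈ cube d M, F w := by
  have h : ∑ p ∈ cube d M ×ˢ cube d M, F (S.piecewise p.2 p.1)
      = ∑ p ∈ cube d M ×ˢ cube d M, F p.1 := by
    have inv : ∀ p : (Fin d → ℤ) × (Fin d → ℤ),
        (S.piecewise (S.piecewise p.1 p.2) (S.piecewise p.2 p.1),
          S.piecewise (S.piecewise p.2 p.1) (S.piecewise p.1 p.2)) = p := by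
      intro p
      ext l <;> by_cases hl : l ∈ S <;> simp [hl]
    have mem : ∀ p ∈ cube d M ×ˢ cube d M,
        (S.piecewise p.2 p.1, S.piecewise p.1 p.2) ∈ cube d M ×ˢ cube d M := by
      intro p hp
      rw [Finset.mem_product, mem_cube, mem_cube] at hp
      rw [Finset.mem_product, mem_cube, mem_cube]
      constructor <;> intro l <;> by_cases hl : l ∈ S <;> simp [hl, hp.1 l, hp.2 l]
    exact Finset.sum_nbij' (fun p => (S.piecewise p.2 p.1, S.piecewise p.1 p.2))
      (fun p => (S.piecewise p.2 p.1, S.piecewise p.1 p.2)) mem mem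
      (fun p _ => inv p) (fun p _ => inv p) (fun p _ => rfl)
  rw [← Finset.sum_product', h, Finset.sum_product, Finset.mul_sum]
  simp

lemma sum_piecewise_le {d M : ℕ} (S : Finset (Fin d)) (F : (Fin d → ℤ) → ℝ) (hF : ∀ w, 0 ≤ F w)
    {A B : Finset (Fin d → ℤ)} (hA : A ⊆ cube d M) (hB : B ⊆ cube d M) :
    ∑ x ∈ A, ∑ b ∈ B, F (S.piecewise b x) ≤ ((cube d M).card : ℝ) * ∑ w ∈ cube d M, F w := by
  rw [← sum_piecewise_eq S F]
  refine (Finset.sum_le_sum_of_subset_of_nonneg hA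
    (fun _ _ _ => Finset.sum_nonneg fun _ _ => hF _)).trans ?_
  exact Finset.sum_le_sum fun x _ => Finset.sum_le_sum_of_subset_of_nonneg hB (fun _ _ _ => hF _)

lemma sum_update {d M : ℕ} (i : Fin d) (F : (Fin d → ℤ) → ℝ) :
    ∑ w ∈ cube d M, ∑ u ∈ Finset.Icc (-(M : ℤ)) M, F (Function.update w i u)
      = (2 * M + 1 : ℝ) * ∑ w ∈ cube d M, F w := by
  have h : ∑ p ∈ cube d M ×ˢ Finset.Icc (-(M : ℤ)) M, F (Function.update p.1 i p.2)
      = ∑ p ∈ cube d M ×ˢ Finset.Icc (-(M : ℤ)) M, F p.1 := by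
    have mem : ∀ p ∈ cube d M ×ˢ Finset.Icc (-(M : ℤ)) M,
        (Function.update p.1 i p.2, p.1 i) ∈ cube d M ×ˢ Finset.Icc (-(M : ℤ)) M := by
      intro p hp
      rw [Finset.mem_product, mem_cube, Finset.mem_Icc] at hp
      rw [Finset.mem_product, mem_cube, Finset.mem_Icc]
      refine ⟨fun l => ?_, hp.1 i⟩
      by_cases hl : l = i
      · subst hl; simpa using hp.2
      · simpa [hl] using hp.1 l
    exact Finset.sum_nbij' (fun p => (Function.update p.1 i p.2, p.1 i))
      (fun p => (Function.update p.1 i p.2, p.1 i)) mem mem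
      (fun p _ => by simp) (fun p _ => by simp) (fun p _ => rfl)
  have hc : ((Finset.Icc (-(M : ℤ)) M).card : ℝ) = 2 * M + 1 := by
    have : (Finset.Icc (-(M : ℤ)) M).card = 2 * M + 1 := by
      rw [Int.card_Icc]; omega
    rw [this]; push_cast; ring
  rw [← Finset.sum_product', h, Finset.sum_product, Finset.mul_sum]
  simp only [Finset.sum_const, nsmul_eq_mul, hc]

/-! ### The edge energy along a coordinate direction -/

/-- The contribution of the edge `{w, w + e_i}` to the Dirichlet form, without the factor `1 / (2d)`,
and `0` if this edge is not contained in `U`. -/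
def edgeE {d : ℕ} (U : Finset (Fin d → ℤ)) (f g : (Fin d → ℤ) → ℝ) (i : Fin d)
    (w : Fin d → ℤ) : ℝ :=
  if w ∈ U ∧ w + Pi.single i 1 ∈ U then
    f w * f (w + Pi.single i 1) * (g w - g (w + Pi.single i 1)) ^ 2 else 0

section
variable {d : ℕ} {U : Finset (Fin d → ℤ)} {f g : (Fin d → ℤ) → ℝ}

lemma edgeE_nonneg (hf : ∀ x ∈ U, 0 < f x) (i : Fin d) (w : Fin d → ℤ) :
    0 ≤ edgeE U f g i w := by
  unfold edgeE
  split_ifs with h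
  · have := hf _ h.1
    have := hf _ h.2
    positivity
  · exact le_rfl

lemma sum_edgeE_le (hd : 0 < d) (hf : ∀ x ∈ U, 0 < f x) (i : Fin d) {Q : Finset (Fin d → ℤ)}
    (hQ : U ⊆ Q) : ∑ w ∈ Q, edgeE U f g i w ≤ 4 * d * dirForm d U f g := by
  have hd' : (0 : ℝ) < d := by exact_mod_cast hd
  have h1 : ∑ w ∈ Q, edgeE U f g i w = ∑ w ∈ U, edgeE U f g i w := by
    symm
    apply Finset.sum_subset hQ
    intro w _ hw
    simp [edgeE, hw]
  have h2 : ∀ w ∈ U, edgeE U f g i w ≤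
      2 * d * ∑ y ∈ U.filter (fun y => latAdj d w y), (f w * f y / (2 * (d : ℝ))) * (g w - g y) ^ 2 := by
    intro w hw
    have hnn : ∀ y ∈ U.filter (fun y => latAdj d w y),
        0 ≤ (f w * f y / (2 * (d : ℝ))) * (g w - g y) ^ 2 := by
      intro y hy
      have := hf _ hw
      have := hf _ (Finset.mem_filter.1 hy).1
      positivity
    unfold edgeE
    split_ifs with h
    · have hm : w + Pi.single i 1 ∈ U.filter (fun y => latAdj d w y) :=
        Finset.mem_filter.2 ⟨h.2, latAdj_single w i⟩
      have h3 := Finset.single_le_sum hnn hm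
      calc _ = 2 * d * ((f w * f (w + Pi.single i 1) / (2 * (d : ℝ)))
                * (g w - g (w + Pi.single i 1)) ^ 2) := by field_simp
        _ ≤ _ := by gcongr
    · exact mul_nonneg (by positivity) (Finset.sum_nonneg hnn)
  rw [h1]
  refine (Finset.sum_le_sum h2).trans ?_
  rw [← Finset.mul_sum]
  unfold dirForm
  apply le_of_eq
  ring

end

lemma sq_sub_le_of_le (h : ℤ → ℝ) {s t : ℤ} (hst : s ≤ t) :
    (h s - h t) ^ 2 ≤ ((t - s : ℤ) : ℝ) * ∑ u ∈ Finset.Ico s t, (h u - h (u + 1)) ^ 2 := by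
  have tel : h s - h t = ∑ u ∈ Finset.Ico s t, (h u - h (u + 1)) := by
    induction t, hst using Int.leInduction with
    | base => simp
    | succ t hst ih =>
      have : Finset.Ico s (t + 1) = insert t (Finset.Ico s t) := by
        ext u; simp only [Finset.mem_Ico, Finset.mem_insert]; omega
      rw [this, Finset.sum_insert (by simp), ← ih]
      ring
  rw [tel]
  refine sq_sum_le_card_mul_sum_sq.trans (le_of_eq ?_)
  rw [Int.card_Ico]
  congr 1
  have : ((t - s).toNat : ℤ) = t - s := Int.toNat_of_nonneg (by omega)
  exact_mod_cast this

lemma sq_sub_le (h : ℤ → ℝ) {M : ℕ} {s t : ℤ} (hs : -(M : ℤ) ≤ s ∧ s ≤ M)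
    (ht : -(M : ℤ) ≤ t ∧ t ≤ M) :
    (h s - h t) ^ 2 ≤ (2 * M : ℝ) *
      ∑ u ∈ Finset.Ico (min s t) (max s t), (h u - h (u + 1)) ^ 2 := by
  have hn : ∀ a b : ℤ, 0 ≤ ∑ u ∈ Finset.Ico a b, (h u - h (u + 1)) ^ 2 := fun a b =>
    Finset.sum_nonneg fun _ _ => sq_nonneg _
  rcases le_total s t with hst | hst
  · rw [min_eq_left hst, max_eq_right hst]
    refine (sq_sub_le_of_le h hst).trans (mul_le_mul_of_nonneg_right ?_ (hn _ _))
    have : t - s ≤ 2 * M := by omega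
    exact_mod_cast this
  · rw [min_eq_right hst, max_eq_left hst, sub_sq_comm]
    refine (sq_sub_le_of_le h hst).trans (mul_le_mul_of_nonneg_right ?_ (hn _ _))
    have : s - t ≤ 2 * M := by omega
    exact_mod_cast this

/-- One stage of a canonical path: moving the `i`-th coordinate of `v` to the value `t` inside a region
where `f ^ 2 ≥ q`. -/
lemma stage_le {d M : ℕ} {U : Finset (Fin d → ℤ)} {f g : (Fin d → ℤ) → ℝ}
    (hf : ∀ x ∈ U, 0 < f x) {q : ℝ} (hq : 0 ≤ q) (v : Fin d → ℤ) (i : Fin d) (t : ℤ)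
    (hv : -(M : ℤ) ≤ v i ∧ v i ≤ M) (ht : -(M : ℤ) ≤ t ∧ t ≤ M)
    (H : ∀ u, min (v i) t ≤ u → u ≤ max (v i) t →
      Function.update v i u ∈ U ∧ q ≤ f (Function.update v i u) ^ 2) :
    q * (g v - g (Function.update v i t)) ^ 2 ≤
      2 * M * ∑ u ∈ Finset.Icc (-(M : ℤ)) M, edgeE U f g i (Function.update v i u) := by
  have h1 := sq_sub_le (fun u => g (Function.update v i u)) hv ht
  simp only [Function.update_eq_self] at h1
  have hsub : Finset.Ico (min (v i) t) (max (v i) t) ⊆ Finset.Icc (-(M : ℤ)) M := by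
    intro u hu
    rw [Finset.mem_Ico] at hu
    rw [Finset.mem_Icc]
    omega
  calc q * (g v - g (Function.update v i t)) ^ 2
      ≤ q * ((2 * M : ℝ) * ∑ u ∈ Finset.Ico (min (v i) t) (max (v i) t),
          (g (Function.update v i u) - g (Function.update v i (u + 1))) ^ 2) := by gcongr
    _ = 2 * M * ∑ u ∈ Finset.Ico (min (v i) t) (max (v i) t),
          q * (g (Function.update v i u) - g (Function.update v i (u + 1))) ^ 2 := by
        rw [← Finset.mul_sum (a := q)]; ring
    _ ≤ 2 * M * ∑ u ∈ Finset.Ico (min (v i) t) (max (v i) t),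
          edgeE U f g i (Function.update v i u) := by
        gcongr with u hu
        rw [Finset.mem_Ico] at hu
        obtain ⟨m1, q1⟩ := H u hu.1 hu.2.le
        obtain ⟨m2, q2⟩ := H (u + 1) (by omega) (by omega)
        have hup : Function.update v i u + Pi.single i 1 = Function.update v i (u + 1) := by
          ext l
          by_cases hl : l = i
          · subst hl; simp
          · simp [hl]
        unfold edgeE
        rw [hup, if_pos ⟨m1, m2⟩]
        gcongr
        have p1 := hf _ m1
        have p2 := hf _ m2
        -- A product of two positive numbers is at least the smaller of their squares.
        rcases le_total (f (Function.update v i u)) (f (Function.update v i (u + 1))) with hle | hle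
          <;> nlinarith
    _ ≤ _ := by
        gcongr
        exact fun w _ _ => edgeE_nonneg hf i _

/-! ### Vertices on canonical paths -/

/-- A vertex on the path from `x` to `b`, in the stage moving the coordinate `i` after those in `S`, where
`j` is moved first, is either at most as far from the origin as `x`, or close to the origin. -/
lemma path_geom {d m : ℕ} {x b : Fin d → ℤ} (hb : b ∈ cube d m) {j : Fin d}
    (hj : ∀ l, x l ^ 2 ≤ x j ^ 2) {S : Finset (Fin d)} {i : Fin d} (hS : (S = ∅ ∧ i = j) ∨ j ∈ S)
    {u : ℤ} (hu1 : min (S.piecewise b x i) (b i) ≤ u) (hu2 : u ≤ max (S.piecewise b x i) (b i)) :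
    nsq (Function.update (S.piecewise b x) i u) ≤ nsq x ∨
      nsq (Function.update (S.piecewise b x) i u) ≤ (2 * d * m : ℤ) ^ 2 := by
  set w := Function.update (S.piecewise b x) i u with hw
  rw [mem_cube] at hb
  have hbm : ∀ l, b l ^ 2 ≤ (m : ℤ) ^ 2 := fun l => sq_le_sq' (hb l).1 (hb l).2
  have hdm : (m : ℤ) ^ 2 ≤ d * (m : ℤ) ^ 2 := by
    have : (1 : ℤ) ≤ d := by exact_mod_cast (Fin.pos j)
    nlinarith [sq_nonneg (m : ℤ)]
  have between : ∀ p q : ℤ, min p q ≤ u → u ≤ max p q → u ^ 2 ≤ max (p ^ 2) (q ^ 2) := by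
    intro p q h1 h2
    rcases le_total p q with h | h
    · rw [min_eq_left h] at h1; rw [max_eq_right h] at h2
      rcases le_total 0 u with h0 | h0
      · exact le_max_of_le_right (by nlinarith)
      · exact le_max_of_le_left (by nlinarith)
    · rw [min_eq_right h] at h1; rw [max_eq_left h] at h2
      rcases le_total 0 u with h0 | h0
      · exact le_max_of_le_left (by nlinarith)
      · exact le_max_of_le_right (by nlinarith)
  have hwl : ∀ l, w l ^ 2 ≤ max (x l ^ 2) (b l ^ 2) := by
    intro l
    by_cases hl : l = i
    · subst hl
      simp only [hw, Function.update_self]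
      refine (between _ _ hu1 hu2).trans ?_
      by_cases hlS : l ∈ S <;> simp [hlS]
    · by_cases hlS : l ∈ S <;> simp [hw, hl, hlS]
  have hwadd : ∀ l, w l ^ 2 ≤ x l ^ 2 + b l ^ 2 := by
    intro l
    refine (hwl l).trans (max_le ?_ ?_)
    · nlinarith [sq_nonneg (b l)]
    · nlinarith [sq_nonneg (x l)]
  have hbs : ∑ l, b l ^ 2 ≤ d * (m : ℤ) ^ 2 := by
    refine (Finset.sum_le_sum fun l _ => hbm l).trans ?_
    simp
  rcases le_total (d * (m : ℤ) ^ 2) (x j ^ 2) with hbig | hsmall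
  · left
    unfold nsq
    rcases hS with ⟨rfl, rfl⟩ | hjS
    · refine Finset.sum_le_sum fun l _ => ?_
      by_cases hl : l = i
      · subst hl
        exact (hwl l).trans (max_le le_rfl ((hbm l).trans (hdm.trans hbig)))
      · simp [hw, hl]
    · have hwj : w j = b j := by
        by_cases hji : j = i
        · subst hji
          simp only [hw, Function.update_self]
          simp only [Finset.piecewise_eq_of_mem _ _ _ hjS, min_self, max_self] at hu1 hu2
          omega
        · simp [hw, hji, hjS]
      have e1 := Finset.add_sum_erase Finset.univ (fun l => w l ^ 2) (Finset.mem_univ j)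
      have e2 := Finset.add_sum_erase Finset.univ (fun l => x l ^ 2) (Finset.mem_univ j)
      have e3 := Finset.add_sum_erase Finset.univ (fun l => b l ^ 2) (Finset.mem_univ j)
      have e4 : ∑ l ∈ Finset.univ.erase j, w l ^ 2 ≤
          ∑ l ∈ Finset.univ.erase j, x l ^ 2 + ∑ l ∈ Finset.univ.erase j, b l ^ 2 := by
        rw [← Finset.sum_add_distrib]
        exact Finset.sum_le_sum fun l _ => hwadd l
      rw [hwj] at e1
      linarith
  · right
    have hxs : ∑ l, x l ^ 2 ≤ d * (d * (m : ℤ) ^ 2) := by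
      refine (Finset.sum_le_sum fun l _ => (hj l).trans hsmall).trans ?_
      simp
    have : nsq w ≤ ∑ l, x l ^ 2 + ∑ l, b l ^ 2 := by
      rw [← Finset.sum_add_distrib]
      exact Finset.sum_le_sum fun l _ => hwadd l
    have hdd : (d : ℤ) * (m : ℤ) ^ 2 ≤ d * (d * (m : ℤ) ^ 2) :=
      mul_le_mul_of_nonneg_left hdm (by positivity)
    nlinarith [sq_nonneg ((d : ℤ) * m)]

/-- The coordinates already replaced by those of the endpoint after `k` further stages of a path that
moves the coordinate `j` first. -/
def moved {d : ℕ} (j : Fin d) (k : ℕ) : Finset (Fin d) :=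
  insert j (Finset.univ.filter (fun l : Fin d => l.val < k))

lemma moved_zero {d : ℕ} (j : Fin d) : moved j 0 = insert j ∅ := by
  simp [moved]

lemma moved_last {d : ℕ} (j : Fin d) : moved j d = Finset.univ := by
  ext l; simp [moved]

lemma moved_succ {d : ℕ} (j k : Fin d) : moved j (k.val + 1) = insert k (moved j k.val) := by
  ext l
  simp only [moved, Finset.mem_insert, Finset.mem_filter, Finset.mem_univ, true_and, Fin.ext_iff]
  omega

lemma path_decomp {d : ℕ} (g : (Fin d → ℤ) → ℝ) (x b : Fin d → ℤ) (j : Fin d) :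
    (g x - g b) ^ 2 ≤ (d + 1) * ((g x - g (Function.update x j (b j))) ^ 2 +
      ∑ k : Fin d, (g ((moved j k).piecewise b x)
        - g (Function.update ((moved j k).piecewise b x) k (b k))) ^ 2) := by
  have tel : g (Function.update x j (b j)) - g b = ∑ k : Fin d, (g ((moved j k).piecewise b x)
        - g (Function.update ((moved j k).piecewise b x) k (b k))) := by
    have h := Finset.sum_range_sub' (fun k => g ((moved j k).piecewise b x)) d
    rw [Finset.sum_range, moved_last, moved_zero, Finset.piecewise_insert,
      Finset.piecewise_empty, Finset.piecewise_univ] at h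
    rw [← h]
    refine Finset.sum_congr rfl fun k _ => ?_
    rw [moved_succ, Finset.piecewise_insert]
  set a := g x - g (Function.update x j (b j))
  set F : Fin d → ℝ := fun k => g ((moved j k).piecewise b x)
        - g (Function.update ((moved j k).piecewise b x) k (b k)) with hF
  have h1 : g x - g b = ∑ k : Option (Fin d), k.elim a F := by
    rw [Fintype.sum_option]
    simp only [Option.elim]
    rw [← tel]; simp only [a]; ring
  have h2 := sq_sum_le_card_mul_sum_sq (s := (Finset.univ : Finset (Option (Fin d))))
    (f := fun k => k.elim a F)
  rw [← h1, Fintype.sum_option] at h2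
  simpa using h2

/-! ### The density near the origin -/

lemma card_UNf_le (d N R : ℕ) (hN : 1 ≤ N) (hR : 1 ≤ R) :
    ((UNf d N R).card : ℝ) ≤ (3 * R : ℝ) ^ d * (N : ℝ) ^ d := by
  have h1 : (UNf d N R).card ≤ (2 * (N * R) + 1) ^ d := by
    rw [← card_cube]; exact Finset.card_le_card (UNf_subset_cube d N R)
  have h2 : 2 * (N * R) + 1 ≤ 3 * R * N := by nlinarith [Nat.mul_le_mul hN hR]
  rw [← mul_pow]
  exact_mod_cast h1.trans (Nat.pow_le_pow_left h2 d)

/-- If `m = 0` there is no lattice point strictly closer to the origin than `v`, and otherwise there are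
at most `(5 d m) ^ d` of them; either way they carry at most half of the mass. -/
lemma center_lower {d N R K : ℕ} (hd : 1 ≤ d) (hN : 1 ≤ N) (hR : 1 ≤ R) {c₀ c₂ : ℝ} (hc₂ : 0 < c₂)
    (hK0 : 0 < K) (hK : c₂ * (5 * d / K : ℝ) ^ d ≤ 1 / 2) {f : (Fin d → ℤ) → ℝ}
    (hsum : ∑ x ∈ UNf d N R, f x ^ 2 = 1)
    (hmono : ∀ x ∈ UNf d N R, ∀ y ∈ UNf d N R, ‖toR d x‖ ≤ ‖toR d y‖ → c₀ * f y ^ 2 ≤ f x ^ 2)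
    (hup : ∀ x ∈ UNf d N R, f x ^ 2 * (N : ℝ) ^ d ≤ c₂)
    (hc₀ : 0 < c₀) {v : Fin d → ℤ} (hv : v ∈ UNf d N R)
    (hvm : nsq v ≤ (2 * d * (N / K : ℕ) : ℤ) ^ 2) :
    c₀ / (2 * (3 * R : ℝ) ^ d) ≤ f v ^ 2 * (N : ℝ) ^ d := by
  have hNd : (0 : ℝ) < (N : ℝ) ^ d := by positivity
  set m := N / K with hm
  set U := UNf d N R with hU
  have hsplit := Finset.sum_filter_add_sum_filter_not U (fun y => nsq y < nsq v) (fun y => f y ^ 2)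
  rw [hsum] at hsplit
  have hin : ∑ y ∈ U with nsq y < nsq v, f y ^ 2 ≤ 1 / 2 := by
    rcases Nat.eq_zero_or_pos m with h0 | hpos
    · have : U.filter (fun y => nsq y < nsq v) = ∅ := by
        apply Finset.filter_eq_empty_iff.2
        intro y _
        have hy : 0 ≤ nsq y := Finset.sum_nonneg fun i _ => sq_nonneg _
        rw [h0] at hvm
        simp at hvm
        omega
      rw [this]; norm_num
    · have hsub : U.filter (fun y => nsq y < nsq v) ⊆ cube d (2 * d * m) := by
        intro y hy
        rw [Finset.mem_filter] at hy
        rw [mem_cube]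
        intro l
        have h1 : y l ^ 2 ≤ (2 * d * m : ℤ) ^ 2 := (coord_sq_le_nsq y l).trans (hy.2.le.trans hvm)
        have := abs_le_of_sq_le_sq' h1 (by positivity)
        push_cast
        exact this
      have hcard : ((U.filter (fun y => nsq y < nsq v)).card : ℝ) ≤ (5 * d / K : ℝ) ^ d * (N : ℝ) ^ d := by
        have h1 : (U.filter (fun y => nsq y < nsq v)).card ≤ (5 * d * m) ^ d := by
          refine (Finset.card_le_card hsub).trans ?_
          rw [card_cube]
          apply Nat.pow_le_pow_left
          nlinarith [Nat.mul_le_mul hd hpos]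
        have h2 : ((5 * d * m : ℕ) : ℝ) ≤ 5 * d / K * N := by
          have : (m : ℝ) ≤ N / K := Nat.cast_div_le
          push_cast
          calc (5 * d * m : ℝ) ≤ 5 * d * (N / K) := by gcongr
            _ = _ := by ring
        rw [← mul_pow]
        calc ((U.filter (fun y => nsq y < nsq v)).card : ℝ) ≤ ((5 * d * m : ℕ) : ℝ) ^ d := by
              exact_mod_cast h1
          _ ≤ _ := by gcongr
      have hle : ∑ y ∈ U with nsq y < nsq v, f y ^ 2
          ≤ (U.filter (fun y => nsq y < nsq v)).card • (c₂ / (N : ℝ) ^ d) := by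
        apply Finset.sum_le_card_nsmul
        intro y hy
        rw [le_div_iff₀ hNd]
        exact hup y (Finset.mem_filter.1 hy).1
      rw [nsmul_eq_mul] at hle
      calc _ ≤ _ := hle
        _ ≤ ((5 * d / K : ℝ) ^ d * (N : ℝ) ^ d) * (c₂ / (N : ℝ) ^ d) := by gcongr
        _ = c₂ * (5 * d / K : ℝ) ^ d := by field_simp
        _ ≤ 1 / 2 := hK
  have hout : ∑ y ∈ U with ¬ nsq y < nsq v, f y ^ 2 ≤ ((3 * R : ℝ) ^ d * (N : ℝ) ^ d) * (f v ^ 2 / c₀) := by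
    have hle : ∑ y ∈ U with ¬ nsq y < nsq v, f y ^ 2
          ≤ (U.filter (fun y => ¬ nsq y < nsq v)).card • (f v ^ 2 / c₀) := by
        apply Finset.sum_le_card_nsmul
        intro y hy
        rw [Finset.mem_filter, not_lt] at hy
        rw [le_div_iff₀ hc₀, mul_comm]
        exact hmono v hv y hy.1 (norm_toR_le hy.2)
    rw [nsmul_eq_mul] at hle
    refine hle.trans ?_
    gcongr
    refine le_trans ?_ (card_UNf_le d N R hN hR)
    exact_mod_cast Finset.card_filter_le _ _
  have hhalf : 1 / 2 ≤ ((3 * R : ℝ) ^ d * (N : ℝ) ^ d) * (f v ^ 2 / c₀) := by linarith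
  have hR' : (0 : ℝ) < (3 * R : ℝ) ^ d := by
    have : (0 : ℝ) < R := by exact_mod_cast hR
    positivity
  rw [div_le_iff₀ (by positivity)]
  have h3 : ((3 * R : ℝ) ^ d * (N : ℝ) ^ d) * (f v ^ 2 / c₀)
      = ((3 * R : ℝ) ^ d * (N : ℝ) ^ d) * f v ^ 2 / c₀ := by ring
  rw [h3, le_div_iff₀ hc₀] at hhalf
  linarith

/-- A vertex that is at most as far from the origin as `x`, or close to the origin, has mass at least
a constant multiple of the mass of `x`. -/
lemma path_bound {d N R K : ℕ} (hd : 1 ≤ d) (hN : 1 ≤ N) (hR : 1 ≤ R) {c₀ c₂ : ℝ} (hc₂ : 0 < c₂)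
    (hK0 : 5 * d ≤ K) (hK : c₂ * (5 * d / K : ℝ) ^ d ≤ 1 / 2) {f : (Fin d → ℤ) → ℝ}
    (hsum : ∑ x ∈ UNf d N R, f x ^ 2 = 1)
    (hmono : ∀ x ∈ UNf d N R, ∀ y ∈ UNf d N R, ‖toR d x‖ ≤ ‖toR d y‖ → c₀ * f y ^ 2 ≤ f x ^ 2)
    (hup : ∀ x ∈ UNf d N R, f x ^ 2 * (N : ℝ) ^ d ≤ c₂)
    (hc₀ : 0 < c₀) {x w : Fin d → ℤ} (hx : x ∈ UNf d N R)
    (hw : nsq w ≤ nsq x ∨ nsq w ≤ (2 * d * (N / K : ℕ) : ℤ) ^ 2) :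
    w ∈ UNf d N R ∧ min c₀ (c₀ / (2 * (3 * R : ℝ) ^ d) / c₂) * f x ^ 2 ≤ f w ^ 2 := by
  have hfx := sq_nonneg (f x)
  rcases hw with hw | hw
  · have hwU : w ∈ UNf d N R := mem_UNf.2 (hw.trans_lt (mem_UNf.1 hx))
    exact ⟨hwU, (mul_le_mul_of_nonneg_right (min_le_left _ _) hfx).trans
      (hmono w hwU x hx (norm_toR_le hw))⟩
  · have hwU : w ∈ UNf d N R := by
      refine mem_UNf.2 (hw.trans_lt ?_)
      have h1 : N / K * K ≤ N := Nat.div_mul_le_self N K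
      have h2 : 2 * d * (N / K) < N * R := by
        have h4 : N / K * (5 * d) ≤ N / K * K := Nat.mul_le_mul_left _ hK0
        have h5 : N ≤ N * R := Nat.le_mul_of_pos_right N hR
        rcases Nat.eq_zero_or_pos (N / K) with h0 | h0
        · rw [h0]; omega
        · have := Nat.mul_le_mul hd h0
          nlinarith
      have h3 : (2 * d * (N / K : ℕ) : ℤ) < ((N * R : ℕ) : ℤ) := by exact_mod_cast h2
      exact pow_lt_pow_left₀ h3 (by positivity) (by norm_num)
    refine ⟨hwU, ?_⟩
    have h1 := center_lower hd hN hR hc₂ (by omega) hK hsum hmono hup hc₀ hwU hw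
    have h2 := hup x hx
    have hNd : (0 : ℝ) < (N : ℝ) ^ d := by positivity
    refine (mul_le_mul_of_nonneg_right (min_le_right _ _) hfx).trans ?_
    set e := c₀ / (2 * (3 * R : ℝ) ^ d) with he
    have hepos : 0 ≤ e := by positivity
    refine le_of_mul_le_mul_right ?_ hNd
    calc e / c₂ * f x ^ 2 * (N : ℝ) ^ d = e / c₂ * (f x ^ 2 * (N : ℝ) ^ d) := by ring
      _ ≤ e / c₂ * c₂ := by gcongr
      _ = e := by field_simp
      _ ≤ _ := h1

/-! ### Summation over all paths -/

/-- Total charge of one stage, over all paths from points of `U` to points of `B`. -/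
lemma stage_total {d M : ℕ} (hd : 0 < d) {U : Finset (Fin d → ℤ)} {f g : (Fin d → ℤ) → ℝ}
    (hf : ∀ x ∈ U, 0 < f x) (hU : U ⊆ cube d M) {B : Finset (Fin d → ℤ)} (hB : B ⊆ cube d M)
    (S : Finset (Fin d)) (i : Fin d) :
    ∑ x ∈ U, ∑ b ∈ B, (2 * M * ∑ u ∈ Finset.Icc (-(M : ℤ)) M,
      edgeE U f g i (Function.update (S.piecewise b x) i u)) ≤
    2 * M * (2 * M + 1) * (cube d M).card * (4 * d * dirForm d U f g) := by
  have hnn := fun w => edgeE_nonneg (g := g) hf i w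
  refine (sum_piecewise_le S (fun w => 2 * M * ∑ u ∈ Finset.Icc (-(M : ℤ)) M,
      edgeE U f g i (Function.update w i u))
      (fun w => mul_nonneg (by positivity) (Finset.sum_nonneg fun _ _ => hnn _)) hU hB).trans ?_
  rw [← Finset.mul_sum, sum_update]
  calc ((cube d M).card : ℝ) * (2 * M * ((2 * M + 1) * ∑ w ∈ cube d M, edgeE U f g i w))
      = 2 * M * (2 * M + 1) * (cube d M).card * ∑ w ∈ cube d M, edgeE U f g i w := by ring
    _ ≤ _ := by
      gcongr
      exact sum_edgeE_le hd hf i hU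

lemma var_le {α : Type*} (U : Finset α) (p g : α → ℝ) (hp : ∑ x ∈ U, p x = 1) (a : ℝ) :
    ∑ x ∈ U, p x * g x ^ 2 - (∑ x ∈ U, p x * g x) ^ 2 ≤ ∑ x ∈ U, p x * (g x - a) ^ 2 := by
  have h : ∑ x ∈ U, p x * (g x - a) ^ 2
      = ∑ x ∈ U, p x * g x ^ 2 - 2 * a * ∑ x ∈ U, p x * g x + a ^ 2 * ∑ x ∈ U, p x := by
    rw [Finset.mul_sum, Finset.mul_sum, ← Finset.sum_sub_distrib, ← Finset.sum_add_distrib]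
    exact Finset.sum_congr rfl fun x _ => by ring
  rw [h, hp]
  nlinarith [sq_nonneg (∑ x ∈ U, p x * g x - a)]

/-- The Poincaré inequality before the constants are simplified, for a set `U` and a central box of
radius `m` such that the canonical paths only meet vertices of mass at least `κ` times that of their
starting point. -/
lemma poincare_core {d M m : ℕ} (hd : 0 < d) (hm : m ≤ M) {U : Finset (Fin d → ℤ)}
    {f : (Fin d → ℤ) → ℝ} (g : (Fin d → ℤ) → ℝ) (hf : ∀ x ∈ U, 0 < f x) (hU : U ⊆ cube d M)
    (hsum : ∑ x ∈ U, f x ^ 2 = 1) {κ : ℝ} (hκ : 0 < κ)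
    (H : ∀ x ∈ U, ∀ w, (nsq w ≤ nsq x ∨ nsq w ≤ (2 * d * m : ℤ) ^ 2) →
      w ∈ U ∧ κ * f x ^ 2 ≤ f w ^ 2) :
    κ * ((cube d m).card * (∑ x ∈ U, f x ^ 2 * g x ^ 2 - (∑ x ∈ U, f x ^ 2 * g x) ^ 2)) ≤
      (d + 1) * ((d + d * d) * (2 * M * (2 * M + 1) * (cube d M).card * (4 * d * dirForm d U f g))) := by
  set B := cube d m with hBdef
  have hB : B ⊆ cube d M := by
    intro b hb
    rw [hBdef, mem_cube] at hb
    rw [mem_cube]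
    intro l
    have := hb l
    omega
  set T : Finset (Fin d) → Fin d → (Fin d → ℤ) → (Fin d → ℤ) → ℝ := fun S i x b =>
    2 * M * ∑ u ∈ Finset.Icc (-(M : ℤ)) M,
      edgeE U f g i (Function.update (S.piecewise b x) i u) with hT
  have hTnn : ∀ S i x b, 0 ≤ T S i x b := fun S i x b =>
    mul_nonneg (by positivity) (Finset.sum_nonneg fun _ _ => edgeE_nonneg hf i _)
  have pair : ∀ x ∈ U, ∀ b ∈ B, κ * (f x ^ 2 * (g x - g b) ^ 2) ≤
      (d + 1) * ∑ j : Fin d, (T ∅ j x b + ∑ k : Fin d, T (moved j k) k x b) := by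
    intro x hx b hb
    have : Nonempty (Fin d) := ⟨⟨0, hd⟩⟩
    obtain ⟨j, hj⟩ := Finite.exists_max (fun l => x l ^ 2)
    have hxM := mem_cube.1 (hU hx)
    have hbM := mem_cube.1 (hB hb)
    have stage : ∀ (S : Finset (Fin d)) (i : Fin d), ((S = ∅ ∧ i = j) ∨ j ∈ S) →
        κ * f x ^ 2 * (g (S.piecewise b x) - g (Function.update (S.piecewise b x) i (b i))) ^ 2
          ≤ T S i x b := by
      intro S i hS
      refine stage_le hf (by positivity) _ i (b i) ?_ (hbM i) ?_
      · by_cases hi : i ∈ S <;> simp [hi, hxM i, hbM i]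
      · intro u hu1 hu2
        exact H x hx _ (path_geom hb hj hS hu1 hu2)
    have h0 := stage ∅ j (Or.inl ⟨rfl, rfl⟩)
    rw [Finset.piecewise_empty] at h0
    have hk : ∀ k : Fin d, _ := fun k => stage (moved j k) k (Or.inr (Finset.mem_insert_self _ _))
    calc κ * (f x ^ 2 * (g x - g b) ^ 2) = κ * f x ^ 2 * (g x - g b) ^ 2 := by ring
      _ ≤ κ * f x ^ 2 * ((d + 1) * ((g x - g (Function.update x j (b j))) ^ 2 +
          ∑ k : Fin d, (g ((moved j k).piecewise b x)
        - g (Function.update ((moved j k).piecewise b x) k (b k))) ^ 2)) :=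
        mul_le_mul_of_nonneg_left (path_decomp g x b j) (by positivity)
      _ = (d + 1) * (κ * f x ^ 2 * (g x - g (Function.update x j (b j))) ^ 2 +
          ∑ k : Fin d, κ * f x ^ 2 * (g ((moved j k).piecewise b x)
        - g (Function.update ((moved j k).piecewise b x) k (b k))) ^ 2) := by
        rw [← Finset.mul_sum]; ring
      _ ≤ (d + 1) * (T ∅ j x b + ∑ k : Fin d, T (moved j k) k x b) := by
        gcongr with k _
        exact hk k
      _ ≤ _ := by
        gcongr
        exact Finset.single_le_sum
          (f := fun j : Fin d => T ∅ j x b + ∑ k : Fin d, T (moved j k) k x b)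
          (fun j _ => add_nonneg (hTnn _ _ _ _) (Finset.sum_nonneg fun _ _ => hTnn _ _ _ _))
          (Finset.mem_univ j)
  set C := 2 * M * (2 * M + 1) * (cube d M).card * (4 * d * dirForm d U f g) with hC
  have tot : ∀ S i, ∑ x ∈ U, ∑ b ∈ B, T S i x b ≤ C := fun S i => stage_total hd hf hU hB S i
  have hvar : (B.card : ℝ) * (∑ x ∈ U, f x ^ 2 * g x ^ 2 - (∑ x ∈ U, f x ^ 2 * g x) ^ 2) ≤
      ∑ x ∈ U, ∑ b ∈ B, f x ^ 2 * (g x - g b) ^ 2 := by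
    rw [Finset.sum_comm, ← nsmul_eq_mul]
    exact Finset.card_nsmul_le_sum _ _ _
      fun b _ => var_le U (fun x => f x ^ 2) g hsum (g b)
  calc _ ≤ κ * ∑ x ∈ U, ∑ b ∈ B, f x ^ 2 * (g x - g b) ^ 2 := by gcongr
    _ = ∑ x ∈ U, ∑ b ∈ B, κ * (f x ^ 2 * (g x - g b) ^ 2) := by simp only [Finset.mul_sum]
    _ ≤ ∑ x ∈ U, ∑ b ∈ B, (d + 1) * ∑ j : Fin d, (T ∅ j x b + ∑ k : Fin d, T (moved j k) k x b) :=
        Finset.sum_le_sum fun x hx => Finset.sum_le_sum fun b hb => pair x hx b hb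
    _ = (d + 1) * ∑ j : Fin d, (∑ x ∈ U, ∑ b ∈ B, T ∅ j x b +
          ∑ k : Fin d, ∑ x ∈ U, ∑ b ∈ B, T (moved j k) k x b) := by
        simp only [← Finset.mul_sum]
        congr 1
        have e1 : ∀ F : Fin d → (Fin d → ℤ) → (Fin d → ℤ) → ℝ,
            ∑ x ∈ U, ∑ b ∈ B, ∑ j, F j x b = ∑ j, ∑ x ∈ U, ∑ b ∈ B, F j x b := by
          intro F
          rw [Finset.sum_comm (s := Finset.univ)]
          exact Finset.sum_congr rfl fun x _ => Finset.sum_comm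
        rw [e1]
        refine Finset.sum_congr rfl fun j _ => ?_
        simp only [Finset.sum_add_distrib]
        rw [e1]
    _ ≤ (d + 1) * ∑ j : Fin d, (C + ∑ k : Fin d, C) := by
        gcongr with j _ k _
        · exact tot _ _
        · exact tot _ _
    _ = _ := by
        simp only [Finset.sum_const, Finset.card_univ, Fintype.card_fin, nsmul_eq_mul]
        ring

theorem statement5 (d : ℕ) (hd : 3 ≤ d) (R : ℕ) (hR : 400 < R)
    (c₀ c₁ c₂ : ℝ) (hc₀ : 0 < c₀) (hc₁ : 0 < c₁) (hc₂ : 0 < c₂) :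
    ∃ c : ℝ, 0 < c ∧ ∀ N : ℕ, 1 ≤ N → ∀ f : (Fin d → ℤ) → ℝ,
      (∀ x ∈ UNf d N R, 0 < f x) →
      (∑ x ∈ UNf d N R, (f x)^2 = 1) →
      (∀ x ∈ UNf d N R, ∀ y ∈ UNf d N R, ‖toR d x‖ ≤ ‖toR d y‖ →
        c₀ * (f y)^2 ≤ (f x)^2) →
      (∀ x ∈ UNf d N R,
        c₁ * (N:ℝ) ^ (-(d:ℤ) - 4) ≤ (f x)^2 ∧ (f x)^2 ≤ c₂ * (N:ℝ) ^ (-(d:ℤ))) →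
      ∀ g : (Fin d → ℤ) → ℝ,
        (∑ x ∈ UNf d N R, (f x)^2 * (g x)^2) - (∑ x ∈ UNf d N R, (f x)^2 * g x)^2
          ≤ c * (N:ℝ)^2 * dirForm d (UNf d N R) f g := by

  have hdpos : (0 : ℝ) < d := by exact_mod_cast (show 0 < d by omega)
  have hRpos : (0 : ℝ) < R := by exact_mod_cast (show 0 < R by omega)
  -- `K ≥ 5 d max(1, 2 c₂)`, so that `c₂ (5 d / K) ^ d ≤ 1 / 2`.
  obtain ⟨K, hK⟩ := exists_nat_ge (5 * d * max 1 (2 * c₂))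
  have hKpos : (0 : ℝ) < K := lt_of_lt_of_le (by positivity) hK
  have hK5 : 5 * d ≤ K := by
    have : (5 * d : ℝ) ≤ K := by
      refine le_trans ?_ hK
      nlinarith [le_max_left 1 (2 * c₂)]
    exact_mod_cast this
  have hKhalf : c₂ * (5 * d / K : ℝ) ^ d ≤ 1 / 2 := by
    have h1 : (5 * d / K : ℝ) ≤ 1 := by
      rw [div_le_one hKpos]; exact_mod_cast hK5
    have h2 : (5 * d / K : ℝ) ^ d ≤ 5 * d / K := by
      simpa using pow_le_pow_of_le_one (by positivity) h1 (show 1 ≤ d by omega)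
    have h3 : c₂ * (5 * d / K : ℝ) ≤ 1 / 2 := by
      rw [← mul_div_assoc, div_le_iff₀ hKpos]
      nlinarith [le_max_right 1 (2 * c₂)]
    exact (mul_le_mul_of_nonneg_left h2 hc₂.le).trans h3
  set κ := min c₀ (c₀ / (2 * (3 * R : ℝ) ^ d) / c₂) with hκdef
  have hκ : 0 < κ := lt_min hc₀ (by positivity)
  refine ⟨(d + 1) * (d + d * d) * (6 * R ^ 2) * (3 * R * K) ^ d * (4 * d) / κ, by positivity, ?_⟩
  intro N hN f hf hsum hmono hbd g
  have hNpos : (0 : ℝ) < N := by exact_mod_cast hN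
  have hup : ∀ x ∈ UNf d N R, f x ^ 2 * (N : ℝ) ^ d ≤ c₂ := by
    intro x hx
    have h := (hbd x hx).2
    rw [zpow_neg, zpow_natCast, ← div_eq_mul_inv] at h
    rwa [le_div_iff₀ (by positivity)] at h
  have core := poincare_core (M := N * R) (m := N / K) (by omega)
    ((Nat.div_le_self N K).trans (Nat.le_mul_of_pos_right N (by omega))) g hf (UNf_subset_cube d N R)
    hsum hκ (fun x hx w hw => path_bound (by omega) hN (by omega) hc₂ hK5 hKhalf hsum hmono hup hc₀ hx hw)
  have hE : 0 ≤ dirForm d (UNf d N R) f g := by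
    unfold dirForm
    refine mul_nonneg (by norm_num) (Finset.sum_nonneg fun x hx => Finset.sum_nonneg fun y hy => ?_)
    have := hf x hx
    have := hf y (Finset.mem_filter.1 hy).1
    positivity
  set E := dirForm d (UNf d N R) f g with hEdef
  set V := ∑ x ∈ UNf d N R, f x ^ 2 * g x ^ 2 - (∑ x ∈ UNf d N R, f x ^ 2 * g x) ^ 2 with hV
  have hQB : ((cube d (N * R)).card : ℝ) ≤ (3 * R * K : ℝ) ^ d * ((cube d (N / K)).card : ℝ) := by
    rw [card_cube, card_cube]
    have h1 : N < (N / K + 1) * K := by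
      have := Nat.lt_mul_div_succ N (show 0 < K by omega)
      linarith
    have h2 : 2 * (N * R) + 1 ≤ 3 * R * K * (2 * (N / K) + 1) := by
      have h3 : N * R ≤ (N / K + 1) * K * R := Nat.mul_le_mul_right R h1.le
      have h4 : (N / K + 1) * K * R ≤ (2 * (N / K) + 1) * K * R := by gcongr; omega
      have h5 : 1 ≤ N * R := Nat.mul_pos hN (by omega)
      nlinarith
    rw [← Nat.cast_ofNat (n := 3)]
    have := Nat.pow_le_pow_left h2 d
    rw [mul_pow] at this
    exact_mod_cast this
  have hM : (2 * ((N * R : ℕ) : ℝ) * (2 * ((N * R : ℕ) : ℝ) + 1)) ≤ 6 * R ^ 2 * N ^ 2 := by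
    have h5 : (1 : ℝ) ≤ N * R := by exact_mod_cast Nat.mul_pos hN (show 0 < R by omega)
    push_cast
    nlinarith
  have hBpos : (0 : ℝ) < (cube d (N / K)).card := by rw [card_cube]; positivity
  have fin : κ * (((cube d (N / K)).card : ℝ) * V) ≤ ((cube d (N / K)).card : ℝ) *
      ((d + 1) * (d + d * d) * (6 * R ^ 2) * (3 * R * K) ^ d * (4 * d) * N ^ 2 * E) := by
    refine core.trans ?_
    calc _ ≤ ((d : ℝ) + 1) * ((d + d * d) * ((6 * R ^ 2 * N ^ 2) *
          ((3 * R * K : ℝ) ^ d * ((cube d (N / K)).card : ℝ)) * (4 * d * E))) := by gcongr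
      _ = _ := by ring
  have fin2 : κ * V ≤ (d + 1) * (d + d * d) * (6 * R ^ 2) * (3 * R * K) ^ d * (4 * d) * N ^ 2 * E := by
    refine le_of_mul_le_mul_left ?_ hBpos
    calc _ = κ * (((cube d (N / K)).card : ℝ) * V) := by ring
      _ ≤ _ := fin
  rw [div_mul_eq_mul_div, div_mul_eq_mul_div, le_div_iff₀ hκ]
  linarith
end
end

section
/- Let V be a finite set and L : V × V → ℝ the generator of an irreducible reversible continuous-time Markov chain on V (that is: L_{x,y} ≥ 0 for x ≠ y, Σ_y L_{x,y} = 0 for each x, the matrix is irreducible, and there is a positive probability measure π on V with π(x)L_{x,y} = π(y)L_{y,x} for all x, y). Let E = {{x,y} : x ≠ y, L_{x,y} > 0}, and for each edge e = {x,y} ∈ E set W(e) = π(x)L_{x,y}. Suppose γ assigns to each ordered pair (x,y) of distinct points of V a finite path γ(x,y) from x to y consisting of edges of E, and set A = max_{e∈E} (1/W(e)) Σ_{(x,y) : e ∈ γ(x,y)} len(γ(x,y))·π(x)·π(y), where len denotes the number of edges of a path. Then for every g : V → ℝ one has Var_π(g) ≤ A·(−Lg, g)_{ℓ²(π)}; in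 particular the spectral gap λ of −L (its second smallest eigenvalue, L being self-adjoint in ℓ²(π)) satisfies λ ≥ 1/A. -/
/-!
The proof is the canonical-path argument. Along a path from `x` to `y` the increment `|g x - g y|`
is at most the sum of `|g p - g q|` over the *distinct* steps of the path
(`abs_sub_le_sum_steps`), so Cauchy–Schwarz gives
`(g x - g y)² ≤ len (γ x y) · ∑ (g p - g q)²` over the steps (`sq_sub_le_length_mul_sum`).
Counting steps without multiplicity matters, since paths may repeat edges while the congestion
constant counts every edge of a path once.

Averaging this bound over `π × π`, exchanging the sums, and bounding the load of each edge by
`A · W(e)` yields the claim, because both sides are symmetric double sums: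
`Var_π g = ½ ∑ π x π y (g x - g y)²` and `(-L g, g) = ½ ∑ π p L p q (g p - g q)²`.
-/

open scoped BigOperators Classical
open Metric Set

noncomputable section

/-- Any two vertices of a list have increment at most the total increment over the distinct
consecutive pairs of the list. In the induction, a first step `(a, b)` that recurs later puts `a`
in the tail, so it need not be counted again. -/
lemma abs_sub_le_sum_steps {V : Type*} [DecidableEq V] (g : V → ℝ) (l : List V) :
    ∀ z ∈ l, ∀ w ∈ l, |g z - g w| ≤ ∑ e ∈ (l.zip l.tail).toFinset, |g e.1 - g e.2| := by
  induction l with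
  | nil => simp
  | cons a t ih =>
    cases t with
    | nil => simp
    | cons b t =>
      simp only [List.tail_cons] at ih ⊢
      rw [List.zip_cons_cons, List.toFinset_cons]
      by_cases hab : (a, b) ∈ ((b :: t).zip t).toFinset
      · rw [Finset.insert_eq_of_mem hab]
        have ha : a ∈ b :: t := (List.of_mem_zip (List.mem_toFinset.1 hab)).1
        intro z hz w hw
        refine ih z ?_ w ?_
        · rcases List.mem_cons.1 hz with rfl | h <;> assumption
        · rcases List.mem_cons.1 hw with rfl | h <;> assumption
      · rw [Finset.sum_insert hab]
        have hb : b ∈ b :: t := List.mem_cons_self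
        have key : ∀ w ∈ b :: t, |g a - g w| ≤ |g a - g b| +
            ∑ e ∈ ((b :: t).zip t).toFinset, |g e.1 - g e.2| := fun w hw =>
          (abs_sub_le (g a) (g b) (g w)).trans (by gcongr; exact ih b hb w hw)
        intro z hz w hw
        rcases List.mem_cons.1 hz with rfl | hz' <;> rcases List.mem_cons.1 hw with rfl | hw'
        · rw [sub_self, abs_zero]
          positivity
        · exact key w hw'
        · rw [abs_sub_comm]
          exact key z hz'
        · exact (ih z hz' w hw').trans (le_add_of_nonneg_left (abs_nonneg _))

lemma sq_sub_le_length_mul_sum {V : Type*} [DecidableEq V] (g : V → ℝ) (l : List V) (x y : V)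
    (hx : l.head? = some x) (hy : l.getLast? = some y) :
    (g x - g y) ^ 2 ≤ ((l.length : ℝ) - 1) *
      ∑ e ∈ (l.zip l.tail).toFinset, (g e.1 - g e.2) ^ 2 := by
  have hxl : x ∈ l := List.mem_of_head? hx
  have hyl : y ∈ l := List.mem_of_getLast? hy
  have hpos : 1 ≤ l.length := List.length_pos_of_mem hxl
  have hcard : ((l.zip l.tail).toFinset.card : ℝ) ≤ (l.length : ℝ) - 1 := by
    have h := List.toFinset_card_le (l.zip l.tail)
    rw [List.length_zip, List.length_tail] at h
    have h' : (l.zip l.tail).toFinset.card + 1 ≤ l.length := by omega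
    have h'' : ((l.zip l.tail).toFinset.card : ℝ) + 1 ≤ l.length := by exact_mod_cast h'
    linarith
  calc (g x - g y) ^ 2 = |g x - g y| ^ 2 := (sq_abs _).symm
    _ ≤ (∑ e ∈ (l.zip l.tail).toFinset, |g e.1 - g e.2|) ^ 2 := by
        gcongr
        exact abs_sub_le_sum_steps g l x hxl y hyl
    _ ≤ (l.zip l.tail).toFinset.card *
          ∑ e ∈ (l.zip l.tail).toFinset, |g e.1 - g e.2| ^ 2 := sq_sum_le_card_mul_sum_sq
    _ ≤ _ := by
        simp only [sq_abs]
        gcongr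

lemma rel_of_mem_zip_tail {V : Type*} {R : V → V → Prop} {l : List V} (h : l.IsChain R)
    {p q : V} (hpq : (p, q) ∈ l.zip l.tail) : R p q := by
  induction l with
  | nil => simp at hpq
  | cons a t ih =>
    cases t with
    | nil => simp at hpq
    | cons b t =>
      rw [List.isChain_cons_cons] at h
      simp only [List.tail_cons, List.zip_cons_cons, List.mem_cons, Prod.mk.injEq] at hpq ih
      rcases hpq with ⟨rfl, rfl⟩ | hpq
      · exact h.1
      · exact ih h.2 hpq

lemma variance_eq_half_sum {V : Type*} [Fintype V] (π g : V → ℝ) (hπsum : ∑ x, π x = 1) :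
    (∑ x, π x * (g x) ^ 2) - (∑ x, π x * g x) ^ 2 =
      1 / 2 * ∑ x, ∑ y, π x * π y * (g x - g y) ^ 2 := by
  have h : ∀ x y, π x * π y * (g x - g y) ^ 2 = π x * g x ^ 2 * π y
      - 2 * ((π x * g x) * (π y * g y)) + π x * (π y * g y ^ 2) := fun x y => by ring
  simp only [h, Finset.sum_add_distrib, Finset.sum_sub_distrib, ← Finset.mul_sum,
    ← Finset.sum_mul, hπsum]
  ring

lemma dirichlet_eq_half_sum {V : Type*} [Fintype V] (L : V → V → ℝ) (π g : V → ℝ)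
    (hrow : ∀ x, ∑ y, L x y = 0) (hrev : ∀ x y, π x * L x y = π y * L y x) :
    ∑ x, π x * (-(∑ y, L x y * g y)) * g x =
      1 / 2 * ∑ p, ∑ q, π p * L p q * (g p - g q) ^ 2 := by
  have h : ∀ p q, π p * L p q * (g p - g q) ^ 2 = π p * g p ^ 2 * L p q
      + 2 * (π p * (-(L p q * g q)) * g p) + π q * g q ^ 2 * L q p := fun p q => by
    linear_combination g q ^ 2 * hrev p q
  have h2 : ∑ p, ∑ q, π q * g q ^ 2 * L q p = 0 := by
    rw [Finset.sum_comm]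
    simp [← Finset.mul_sum, hrow]
  simp only [h, Finset.sum_add_distrib, h2]
  simp only [← Finset.mul_sum, ← Finset.sum_mul, hrow, Finset.sum_neg_distrib]
  simp

theorem statement6 (V : Type*) [Fintype V] [DecidableEq V]
    (L : V → V → ℝ) (π : V → ℝ)
    (hoff : ∀ x y, x ≠ y → 0 ≤ L x y)
    (hrow : ∀ x, ∑ y, L x y = 0)
    (hπpos : ∀ x, 0 < π x) (hπsum : ∑ x, π x = 1)
    (hrev : ∀ x y, π x * L x y = π y * L y x)
    (γ : V → V → List V)
    (hγ : ∀ x y, x ≠ y → (γ x y).head? = some x ∧ (γ x y).getLast? = some y ∧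
      (γ x y).Chain' (fun a b => a ≠ b ∧ 0 < L a b)) :
    ∀ g : V → ℝ,
      (∑ x, π x * (g x)^2) - (∑ x, π x * g x)^2 ≤
        sSup { a : ℝ | ∃ p q : V, p ≠ q ∧ 0 < L p q ∧
          a = (1/(π p * L p q)) *
            ∑ xy : V × V,
              (if xy.1 ≠ xy.2 ∧
                  ((p, q) ∈ (γ xy.1 xy.2).zip (γ xy.1 xy.2).tail ∨
                   (q, p) ∈ (γ xy.1 xy.2).zip (γ xy.1 xy.2).tail)
                then ((γ xy.1 xy.2).length - 1 : ℝ) * π xy.1 * π xy.2 else 0) } *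
        (∑ x, π x * (-(∑ y, L x y * g y)) * g x) := by
  intro g
  set S : V → V → ℝ := fun p q => ∑ xy : V × V,
    (if xy.1 ≠ xy.2 ∧
        ((p, q) ∈ (γ xy.1 xy.2).zip (γ xy.1 xy.2).tail ∨
         (q, p) ∈ (γ xy.1 xy.2).zip (γ xy.1 xy.2).tail)
      then ((γ xy.1 xy.2).length - 1 : ℝ) * π xy.1 * π xy.2 else 0) with hS
  set T : Set ℝ := { a : ℝ | ∃ p q : V, p ≠ q ∧ 0 < L p q ∧ a = (1/(π p * L p q)) * S p q } with hT
  change _ ≤ sSup T * _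
  have hTbdd : BddAbove T := by
    refine ((Set.finite_range fun e : V × V => 1 / (π e.1 * L e.1 e.2) * S e.1 e.2).subset
      ?_).bddAbove
    rintro a ⟨p, q, -, -, rfl⟩
    exact ⟨(p, q), rfl⟩
  have hload : ∀ p q, S p q * (g p - g q) ^ 2 ≤ sSup T * (π p * L p q * (g p - g q) ^ 2) := by
    intro p q
    by_cases hpq : p = q
    · simp [hpq]
    rcases (hoff p q hpq).eq_or_lt with h0 | hLpos
    · -- a pair with zero rate in one direction has zero rate in both, so no path uses it
      have h0' : L q p = 0 := by
        have h := hrev q p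
        rw [← h0, mul_zero] at h
        exact (mul_eq_zero.1 h).resolve_left (hπpos q).ne'
      have hS0 : S p q = 0 := by
        refine Finset.sum_eq_zero fun xy _ => if_neg ?_
        rintro ⟨hne, h | h⟩
        · exact (rel_of_mem_zip_tail (hγ _ _ hne).2.2 h).2.ne h0
        · exact (rel_of_mem_zip_tail (hγ _ _ hne).2.2 h).2.ne' h0'
      simp [hS0, ← h0]
    · have hW : 0 < π p * L p q := mul_pos (hπpos p) hLpos
      have hle : 1 / (π p * L p q) * S p q ≤ sSup T := le_csSup hTbdd ⟨p, q, hpq, hLpos, rfl⟩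
      rw [one_div, inv_mul_le_iff₀ hW] at hle
      calc S p q * (g p - g q) ^ 2 ≤ (π p * L p q * sSup T) * (g p - g q) ^ 2 := by gcongr
        _ = _ := by ring
  have hpath : ∀ xy : V × V, π xy.1 * π xy.2 * (g xy.1 - g xy.2) ^ 2 ≤
      ∑ e : V × V, (if xy.1 ≠ xy.2 ∧
        ((e.1, e.2) ∈ (γ xy.1 xy.2).zip (γ xy.1 xy.2).tail ∨
         (e.2, e.1) ∈ (γ xy.1 xy.2).zip (γ xy.1 xy.2).tail)
      then ((γ xy.1 xy.2).length - 1 : ℝ) * π xy.1 * π xy.2 else 0) * (g e.1 - g e.2) ^ 2 := by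
    rintro ⟨x, y⟩
    by_cases hxy : x = y
    · simp [hxy]
    obtain ⟨hx, hy, -⟩ := hγ x y hxy
    have hππ : 0 ≤ π x * π y := (mul_pos (hπpos x) (hπpos y)).le
    have hlen : (0 : ℝ) ≤ (γ x y).length - 1 := by
      have : 1 ≤ (γ x y).length := List.length_pos_of_mem (List.mem_of_head? hx)
      have : (1 : ℝ) ≤ (γ x y).length := by exact_mod_cast this
      linarith
    have hc : 0 ≤ ((γ x y).length - 1 : ℝ) * π x * π y := by
      rw [mul_assoc]
      exact mul_nonneg hlen hππ
    calc π x * π y * (g x - g y) ^ 2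
        ≤ π x * π y * (((γ x y).length - 1 : ℝ) *
            ∑ e ∈ ((γ x y).zip (γ x y).tail).toFinset, (g e.1 - g e.2) ^ 2) := by
          gcongr
          exact sq_sub_le_length_mul_sum g _ x y hx hy
      _ = ∑ e ∈ ((γ x y).zip (γ x y).tail).toFinset,
            ((γ x y).length - 1 : ℝ) * π x * π y * (g e.1 - g e.2) ^ 2 := by
          rw [← Finset.mul_sum]
          ring
      _ ≤ _ := by
          rw [← Finset.sum_filter_add_sum_filter_not Finset.univ
            (fun e => e ∈ ((γ x y).zip (γ x y).tail).toFinset)]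
          refine le_add_of_le_of_nonneg (le_of_eq ?_) (Finset.sum_nonneg fun e _ => ?_)
          · rw [Finset.filter_univ_mem]
            refine Finset.sum_congr rfl fun e he => ?_
            rw [if_pos ⟨hxy, Or.inl (List.mem_toFinset.1 he)⟩]
          · refine mul_nonneg ?_ (sq_nonneg _)
            split_ifs
            · exact hc
            · exact le_rfl
  rw [variance_eq_half_sum π g hπsum, dirichlet_eq_half_sum L π g hrow hrev]
  have hmain : ∑ x, ∑ y, π x * π y * (g x - g y) ^ 2 ≤
      sSup T * ∑ p, ∑ q, π p * L p q * (g p - g q) ^ 2 := by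
    calc ∑ x, ∑ y, π x * π y * (g x - g y) ^ 2
        = ∑ xy : V × V, π xy.1 * π xy.2 * (g xy.1 - g xy.2) ^ 2 := by
          rw [Fintype.sum_prod_type]
      _ ≤ _ := Finset.sum_le_sum fun xy _ => hpath xy
      _ = ∑ e : V × V, S e.1 e.2 * (g e.1 - g e.2) ^ 2 := by
          rw [Finset.sum_comm]
          simp only [hS, Finset.sum_mul]
      _ ≤ ∑ e : V × V, sSup T * (π e.1 * L e.1 e.2 * (g e.1 - g e.2) ^ 2) :=
          Finset.sum_le_sum fun e _ => hload e.1 e.2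
      _ = _ := by
          rw [← Finset.mul_sum, Fintype.sum_prod_type]
  linarith
end
end
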